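/- Let u ∈ W^{1,p}(D_2(0),S^1) be a stationary p-harmonic map on the Euclidean disk D_2(0) ⊂ ℝ², p ∈ (1,2). Then for any annulus A_{r_1,r_2}(a) = D_{r_2}(a) ∖ D_{r_1}(a) ⊂ D_2(0), the Pohozaev-type identity ∫_{r_1}^{r_2} ( ∫_{D_r(a)} (2−p)|du|^p ) dr = ∫_{A_{r_1,r_2}(a)} |z−a| ( |du|^p − p|du|^{p−2} |du((z−a)/|z−a|)|² ) dz holds. -/

import Mathlib

open MeasureTheory Metric Filter Topology Set
open scoped ENNReal NNReal

noncomputable section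

/-- The Hilbert–Schmidt norm of an `ℝ`-linear map `ℂ → ℂ`: for the differential `du` of
a map on the plane `ℝ² ≃ ℂ` this is the pointwise energy density norm `|du|`. -/
def hsNorm (T : ℂ →L[ℝ] ℂ) : ℝ := Real.sqrt (‖T 1‖ ^ 2 + ‖T Complex.I‖ ^ 2)

/-- The real inner product on `ℂ ≃ ℝ²`. -/
def rinner (a b : ℂ) : ℝ := ((starRingEnd ℂ) a * b).re

/-- The one-form `ju = u¹du² - u²du¹`, evaluated at `z` on the vector `w`. -/
def jform (u : ℂ → ℂ) (du : ℂ → ℂ →L[ℝ] ℂ) (z w : ℂ) : ℝ :=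
  ((starRingEnd ℂ) (u z) * du z w).im

/-- A smooth real-valued test function compactly supported in `Ω`. -/
def IsTest (Ω : Set ℂ) (φ : ℂ → ℝ) : Prop :=
  ContDiff ℝ (⊤ : ℕ∞) φ ∧ HasCompactSupport φ ∧ tsupport φ ⊆ Ω

/-- A smooth vector field compactly supported in `Ω`. -/
def IsTestVF (Ω : Set ℂ) (X : ℂ → ℂ) : Prop :=
  ContDiff ℝ (⊤ : ℕ∞) X ∧ HasCompactSupport X ∧ tsupport X ⊆ Ω

/-- `du` is the weak (distributional) differential of `u` on `Ω`. -/
def IsWeakDeriv (Ω : Set ℂ) (u : ℂ → ℂ) (du : ℂ → ℂ →L[ℝ] ℂ) : Prop :=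
  ∀ φ : ℂ → ℝ, IsTest Ω φ → ∀ w : ℂ,
    (∫ z in Ω, fderiv ℝ φ z w • u z) = -∫ z in Ω, φ z • du z w

/-- `u ∈ W^{1,p}(Ω,S¹)`, with weak differential `du`: `u` is an `S¹`-valued map
(`|u| = 1` a.e.) with `|du| ∈ L^p(Ω)`. -/
def MemW1pS1 (p : ℝ) (Ω : Set ℂ) (u : ℂ → ℂ) (du : ℂ → ℂ →L[ℝ] ℂ) : Prop :=
  (∀ᵐ z ∂(volume.restrict Ω), ‖u z‖ = 1) ∧
  AEStronglyMeasurable u (volume.restrict Ω) ∧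
  AEStronglyMeasurable du (volume.restrict Ω) ∧
  Integrable (fun z => hsNorm (du z) ^ p) (volume.restrict Ω) ∧
  IsWeakDeriv Ω u du

/-- The basis `(1, i)` of `ℂ` over `ℝ`. -/
def cb : Fin 2 → ℂ := ![1, Complex.I]

/-- `u` is weakly `p`-harmonic on `Ω`: `div(|du|^{p-2} ju) = 0` distributionally. -/
def WeaklyPHarm (p : ℝ) (Ω : Set ℂ) (u : ℂ → ℂ) (du : ℂ → ℂ →L[ℝ] ℂ) : Prop :=
  ∀ ψ : ℂ → ℝ, IsTest Ω ψ →
    (∫ z in Ω, hsNorm (du z) ^ (p - 2) *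
      ∑ i : Fin 2, jform u du z (cb i) * fderiv ℝ ψ z (cb i)) = 0

/-- `u` is stationary `p`-harmonic on `Ω`: weakly `p`-harmonic and critical for inner
variations, `∫ |du|^p div X - p |du|^{p-2} ⟨du^* du, ∇X⟩ = 0` for every smooth
compactly supported vector field `X`. -/
def StatPHarm (p : ℝ) (Ω : Set ℂ) (u : ℂ → ℂ) (du : ℂ → ℂ →L[ℝ] ℂ) : Prop :=
  WeaklyPHarm p Ω u du ∧
  ∀ X : ℂ → ℂ, IsTestVF Ω X →
    (∫ z in Ω,
      (hsNorm (du z) ^ p * ∑ i : Fin 2, rinner (cb i) (fderiv ℝ X z (cb i)) -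
        p * hsNorm (du z) ^ (p - 2) *
          ∑ i : Fin 2, ∑ j : Fin 2,
            rinner (du z (cb i)) (du z (cb j)) * rinner (cb j) (fderiv ℝ X z (cb i)))) = 0

/-- The singular set of `u` in `Ω`: the set of points of `Ω` near which `u` fails
to be `C¹`. -/
def SingSet (Ω : Set ℂ) (u : ℂ → ℂ) : Set ℂ :=
  {x ∈ Ω | ¬∃ V ∈ 𝓝 x, ContDiffOn ℝ 1 u V}

end

/-!
Stationarity is tested with the radial field `X = η(|z - a|) (z - a)`, where `η' = -χ` and `χ` is a
smooth cutoff supported in `(r₁, r₂)`. With `v = z - a` and `n` the dimension of the domain,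
`∇X = η id - (χ / |v|) v ⊗ v`, so that the inner variation formula becomes
`∫ η(|v|) (n - p) |du|^p = ∫ χ(|v|) |v| (|du|^p - p |du|^{p-2} |du(v/|v|)|²)`.
Since `η(s) = ∫_s^∞ χ`, Fubini rewrites the left-hand side as `∫ χ(r) ∫_{D_r(a)} (n - p) |du|^p dr`,
and the identity is the limit as `χ` increases to the indicator function of `(r₁, r₂)`.
-/

section HilbertSchmidt

variable {ι E F : Type*} [Fintype ι]
  [NormedAddCommGroup E] [InnerProductSpace ℝ E] [NormedAddCommGroup F] [InnerProductSpace ℝ F]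
  (b : OrthonormalBasis ι ℝ E)

/-- The Hilbert–Schmidt inner product `tr (S* T)`, computed in the orthonormal basis `b`.
It encodes every contraction of the inner variation formula: `|du|² = ⟨du, du⟩`,
`div X = ⟨id, ∇X⟩` and `⟨du* du, ∇X⟩ = ⟨du, du ∘ ∇X⟩`. -/
noncomputable def hilbertSchmidtInner (S T : E →L[ℝ] F) : ℝ :=
  ∑ i, inner ℝ (S (b i)) (T (b i))

/-- The Hilbert–Schmidt norm, computed in the orthonormal basis `b`. -/
noncomputable def hilbertSchmidtNorm (T : E →L[ℝ] F) : ℝ :=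
  √(hilbertSchmidtInner b T T)

lemma hilbertSchmidtInner_self_eq_sum (T : E →L[ℝ] F) :
    hilbertSchmidtInner b T T = ∑ i, ‖T (b i)‖ ^ 2 := by
  simp only [hilbertSchmidtInner, real_inner_self_eq_norm_sq]

lemma hilbertSchmidtInner_self (T : E →L[ℝ] F) :
    hilbertSchmidtInner b T T = hilbertSchmidtNorm b T ^ 2 := by
  refine (Real.sq_sqrt ?_).symm
  rw [hilbertSchmidtInner_self_eq_sum]
  positivity

lemma hilbertSchmidtNorm_nonneg (T : E →L[ℝ] F) : 0 ≤ hilbertSchmidtNorm b T :=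
  Real.sqrt_nonneg _

lemma hilbertSchmidtInner_id_id :
    hilbertSchmidtInner b (.id ℝ E) (.id ℝ E) = Module.finrank ℝ E := by
  simp [hilbertSchmidtInner_self_eq_sum, Module.finrank_eq_card_basis b.toBasis]

lemma hilbertSchmidtInner_rankOne (T : E →L[ℝ] F) (y : F) (v : E) :
    hilbertSchmidtInner b T (InnerProductSpace.rankOne ℝ y v) = inner ℝ (T v) y := by
  conv_rhs => rw [← b.sum_repr' v, map_sum, sum_inner]
  simp only [hilbertSchmidtInner, InnerProductSpace.rankOne_apply, map_smul, inner_smul_left,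
    inner_smul_right, real_inner_comm, conj_trivial]

lemma hilbertSchmidtInner_comp_smul_id_add_smul_rankOne (T : E →L[ℝ] F) (c d : ℝ) (v : E) :
    hilbertSchmidtInner b T (T ∘L (c • .id ℝ E + d • InnerProductSpace.rankOne ℝ v v)) =
      c * hilbertSchmidtInner b T T + d * ‖T v‖ ^ 2 := by
  rw [← real_inner_self_eq_norm_sq, ← hilbertSchmidtInner_rankOne b T (T v) v]
  simp [hilbertSchmidtInner, inner_add_right, inner_smul_right, Finset.sum_add_distrib,
    Finset.mul_sum]

lemma hilbertSchmidtInner_comp_eq_sum_sum (T : E →L[ℝ] F) (A : E →L[ℝ] E) :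
    hilbertSchmidtInner b T (T ∘L A) =
      ∑ i, ∑ j, inner ℝ (T (b i)) (T (b j)) * inner ℝ (b j) (A (b i)) := by
  refine Finset.sum_congr rfl fun i _ => ?_
  conv_lhs => rw [ContinuousLinearMap.comp_apply, ← b.sum_repr' (A (b i)), map_sum, inner_sum]
  simp only [map_smul, inner_smul_right, mul_comm]

lemma norm_apply_le_hilbertSchmidtNorm_mul_norm (T : E →L[ℝ] F) (v : E) :
    ‖T v‖ ≤ hilbertSchmidtNorm b T * ‖v‖ := by
  calc ‖T v‖ = ‖∑ i, inner ℝ (b i) v • T (b i)‖ := by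
        simp only [← map_smul, ← map_sum, b.sum_repr']
    _ ≤ ∑ i, ‖T (b i)‖ * ‖inner ℝ (b i) v‖ :=
        norm_sum_le_of_le _ fun i _ => by rw [norm_smul, mul_comm]
    _ ≤ √(∑ i, ‖T (b i)‖ ^ 2) * √(∑ i, ‖inner ℝ (b i) v‖ ^ 2) :=
        Real.sum_mul_le_sqrt_mul_sqrt _ _ _
    _ = hilbertSchmidtNorm b T * ‖v‖ := by
        rw [b.sum_sq_norm_inner_right, Real.sqrt_sq (norm_nonneg v), hilbertSchmidtNorm,
          hilbertSchmidtInner_self_eq_sum]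

lemma continuous_hilbertSchmidtNorm :
    Continuous (hilbertSchmidtNorm b : (E →L[ℝ] F) → ℝ) := by
  unfold hilbertSchmidtNorm hilbertSchmidtInner
  fun_prop

lemma hilbertSchmidtNorm_rpow_sub_two_mul_sq {p : ℝ} (hp : 0 < p) (T : E →L[ℝ] F) :
    hilbertSchmidtNorm b T ^ (p - 2) * hilbertSchmidtNorm b T ^ 2 =
      hilbertSchmidtNorm b T ^ p := by
  rw [← Real.rpow_add_natCast' (hilbertSchmidtNorm_nonneg b T) (by simpa using hp.ne')]
  simp

end HilbertSchmidt

section Density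

variable {ι E F : Type*} [Fintype ι]
  [NormedAddCommGroup E] [InnerProductSpace ℝ E] [NormedAddCommGroup F] [InnerProductSpace ℝ F]
  (b : OrthonormalBasis ι ℝ E)

/-- The integrand `|du|^p div X - p |du|^{p-2} ⟨du* du, ∇X⟩` of the first inner variation of
the `p`-energy, at a point where `du = T` and `∇X = A`. -/
noncomputable def innerVariationDensity (p : ℝ) (T : E →L[ℝ] F) (A : E →L[ℝ] E) : ℝ :=
  hilbertSchmidtNorm b T ^ p * hilbertSchmidtInner b (.id ℝ E) A -
    p * hilbertSchmidtNorm b T ^ (p - 2) * hilbertSchmidtInner b T (T ∘L A)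

/-- The boundary density `|v| (|du|^p - p |du|^{p-2} |du(v/|v|)|²)` of the Pohozaev identity, at a
point with `du = T` whose displacement from the center is `v`. -/
noncomputable def pohozaevDensity (p : ℝ) (T : E →L[ℝ] F) (v : E) : ℝ :=
  ‖v‖ * (hilbertSchmidtNorm b T ^ p -
    p * hilbertSchmidtNorm b T ^ (p - 2) * ‖T (‖v‖⁻¹ • v)‖ ^ 2)

@[simp]
lemma innerVariationDensity_zero_right (p : ℝ) (T : E →L[ℝ] F) :
    innerVariationDensity b p T 0 = 0 := by
  simp [innerVariationDensity, hilbertSchmidtInner]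

lemma innerVariationDensity_smul_id_add_smul_rankOne {p : ℝ} (hp : 0 < p) (T : E →L[ℝ] F)
    {v : E} (hv : v ≠ 0) (c d : ℝ) :
    innerVariationDensity b p T
        (c • .id ℝ E + (-d / ‖v‖) • InnerProductSpace.rankOne ℝ v v) =
      c * ((Module.finrank ℝ E - p) * hilbertSchmidtNorm b T ^ p) -
        d * pohozaevDensity b p T v := by
  have hv' : ‖v‖ ≠ 0 := norm_ne_zero_iff.2 hv
  have hdiv := hilbertSchmidtInner_comp_smul_id_add_smul_rankOne b (.id ℝ E) c (-d / ‖v‖) v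
  rw [ContinuousLinearMap.id_comp, hilbertSchmidtInner_id_id, ContinuousLinearMap.id_apply] at hdiv
  rw [innerVariationDensity, pohozaevDensity, hdiv,
    hilbertSchmidtInner_comp_smul_id_add_smul_rankOne, hilbertSchmidtInner_self,
    ← hilbertSchmidtNorm_rpow_sub_two_mul_sq b hp, map_smul, norm_smul, norm_inv, norm_norm]
  field_simp
  ring

lemma abs_pohozaevDensity_le {p : ℝ} (hp : 0 < p) (T : E →L[ℝ] F) (v : E) :
    |pohozaevDensity b p T v| ≤ ‖v‖ * ((1 + p) * hilbertSchmidtNorm b T ^ p) := by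
  have hT := hilbertSchmidtNorm_nonneg b T
  have hdir : ‖T (‖v‖⁻¹ • v)‖ ≤ hilbertSchmidtNorm b T := by
    refine (norm_apply_le_hilbertSchmidtNorm_mul_norm b T _).trans (mul_le_of_le_one_right hT ?_)
    rw [norm_smul, norm_inv, norm_norm]
    exact inv_mul_le_one
  have hterm : hilbertSchmidtNorm b T ^ (p - 2) * ‖T (‖v‖⁻¹ • v)‖ ^ 2 ≤
      hilbertSchmidtNorm b T ^ p := by
    rw [← hilbertSchmidtNorm_rpow_sub_two_mul_sq b hp]
    gcongr
  rw [pohozaevDensity, abs_mul, abs_norm]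
  gcongr
  calc _ ≤ |hilbertSchmidtNorm b T ^ p| +
        |p * hilbertSchmidtNorm b T ^ (p - 2) * ‖T (‖v‖⁻¹ • v)‖ ^ 2| := abs_sub _ _
    _ = hilbertSchmidtNorm b T ^ p +
        p * (hilbertSchmidtNorm b T ^ (p - 2) * ‖T (‖v‖⁻¹ • v)‖ ^ 2) := by
        rw [abs_of_nonneg (by positivity), abs_of_nonneg (by positivity), mul_assoc]
    _ ≤ (1 + p) * hilbertSchmidtNorm b T ^ p := by
        rw [one_add_mul]
        gcongr

variable [MeasurableSpace E] [BorelSpace E] [SecondCountableTopology E] {μ : Measure E}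
  {p : ℝ} {du : E → E →L[ℝ] F}

lemma aestronglyMeasurable_pohozaevDensity (hdu : AEStronglyMeasurable du μ) (a : E) :
    AEStronglyMeasurable (fun z => pohozaevDensity b p (du z) (z - a)) μ := by
  have hnorm : AEMeasurable (fun z => hilbertSchmidtNorm b (du z)) μ :=
    ((continuous_hilbertSchmidtNorm b).comp_aestronglyMeasurable hdu).aemeasurable
  have hdir : Measurable fun z : E => ‖z - a‖⁻¹ • (z - a) := by fun_prop
  have hradial : AEMeasurable (fun z => ‖du z (‖z - a‖⁻¹ • (z - a))‖) μ :=
    (isBoundedBilinearMap_apply.continuous.comp_aestronglyMeasurable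
      (hdu.prodMk hdir.aestronglyMeasurable)).norm.aemeasurable
  unfold pohozaevDensity
  fun_prop

lemma integrableOn_pohozaevDensity_ball (hp : 0 < p) {a : E} {R : ℝ}
    (hdu : AEStronglyMeasurable du (μ.restrict (ball a R)))
    (hint : IntegrableOn (fun z => hilbertSchmidtNorm b (du z) ^ p) (ball a R) μ) :
    IntegrableOn (fun z => pohozaevDensity b p (du z) (z - a)) (ball a R) μ := by
  refine Integrable.mono' ((hint.const_mul (1 + p)).const_mul R)
    (aestronglyMeasurable_pohozaevDensity b hdu a) ?_
  filter_upwards [ae_restrict_mem measurableSet_ball] with z hz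
  have hnorm := hilbertSchmidtNorm_nonneg b (du z)
  refine (abs_pohozaevDensity_le b hp _ _).trans ?_
  gcongr
  exact (mem_ball_iff_norm.1 hz).le

end Density

section RadialField

variable {E : Type*} [NormedAddCommGroup E] [InnerProductSpace ℝ E]

/-- The radial vector field `z ↦ η(|z - a|) (z - a)` with center `a` and profile `η`. -/
def radialField (η : ℝ → ℝ) (a z : E) : E := η ‖z - a‖ • (z - a)

lemma hasFDerivAt_norm_of_ne_zero {v : E} (hv : v ≠ 0) :
    HasFDerivAt (fun w : E => ‖w‖) (‖v‖⁻¹ • innerSL ℝ v) v := by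
  have hsq : ‖v‖ ^ 2 ≠ 0 := pow_ne_zero 2 (norm_ne_zero_iff.2 hv)
  convert! ((hasStrictFDerivAt_norm_sq v).hasFDerivAt.sqrt hsq) using 1
  · simp only [Real.sqrt_sq (norm_nonneg _)]
  · rw [Real.sqrt_sq (norm_nonneg v), ← Nat.cast_smul_eq_nsmul ℝ, smul_smul]
    congr 1
    push_cast
    field_simp

lemma hasFDerivAt_radialField {η : ℝ → ℝ} {η' : ℝ} {a z : E}
    (hη : HasDerivAt η η' ‖z - a‖) (hz : z ≠ a) :
    HasFDerivAt (radialField η a) (η ‖z - a‖ • .id ℝ E +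
      (η' / ‖z - a‖) • InnerProductSpace.rankOne ℝ (z - a) (z - a)) z := by
  have hsub : HasFDerivAt (fun w : E => w - a) (.id ℝ E) z := (hasFDerivAt_id z).sub_const a
  have hnorm := (hasFDerivAt_norm_of_ne_zero (sub_ne_zero.2 hz)).comp z hsub
  convert! (hη.comp_hasFDerivAt z hnorm).smul hsub using 1
  ext w
  simp [smul_smul, div_eq_mul_inv, -map_sub, mul_assoc]

lemma contDiff_radialField {n : ℕ∞} {η : ℝ → ℝ} (hη : ContDiff ℝ n η)
    (hη₀ : η =ᶠ[𝓝 0] fun _ => η 0) (a : E) : ContDiff ℝ n (radialField η a) := by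
  refine contDiff_iff_contDiffAt.2 fun z => ?_
  obtain rfl | hz := eq_or_ne z a
  · have hnorm : Tendsto (fun w => ‖w - z‖) (𝓝 z) (𝓝 0) :=
      tendsto_iff_norm_sub_tendsto_zero.1 tendsto_id
    have hlinear : radialField η z =ᶠ[𝓝 z] fun w => η 0 • (w - z) :=
      (hnorm.eventually hη₀).mono fun w hw => congrArg (· • (w - z)) hw
    exact ContDiffAt.congr_of_eventuallyEq (by fun_prop) hlinear
  · have hnorm : ContDiffAt ℝ n (fun w => ‖w - a‖) z :=
      ContDiffAt.norm ℝ (by fun_prop) (sub_ne_zero.2 hz)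
    exact (hη.contDiffAt.comp z hnorm).smul (by fun_prop)

lemma tsupport_radialField_subset_closedBall {η : ℝ → ℝ} {R : ℝ}
    (hη : ∀ s, R < s → η s = 0) (a : E) : tsupport (radialField η a) ⊆ closedBall a R := by
  refine closure_minimal (fun z hz => ?_) isClosed_closedBall
  contrapose! hz
  rw [mem_closedBall_iff_norm, not_le] at hz
  simp [radialField, hη _ hz]

end RadialField

section TailIntegral

/-- The decreasing primitive `s ↦ ∫_s^∞ χ` of `χ`. -/
noncomputable def tailIntegral (χ : ℝ → ℝ) (s : ℝ) : ℝ := ∫ t in Ioi s, χ t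

variable {χ : ℝ → ℝ}

lemma hasDerivAt_tailIntegral (hχ : Continuous χ) (hint : Integrable χ) (s : ℝ) :
    HasDerivAt (tailIntegral χ) (-χ s) s := by
  have htail : tailIntegral χ = fun r => tailIntegral χ 0 - ∫ t in (0 : ℝ)..r, χ t := by
    funext r
    rw [← intervalIntegral.integral_Ioi_sub_Ioi' hint.integrableOn hint.integrableOn,
      tailIntegral, tailIntegral, sub_sub_cancel]
  rw [htail]
  exact (intervalIntegral.integral_hasDerivAt_right (hχ.intervalIntegrable _ _)
    (hχ.stronglyMeasurableAtFilter _ _) hχ.continuousAt).const_sub _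

lemma contDiff_tailIntegral (hχ : ContDiff ℝ (⊤ : ℕ∞) χ) (hint : Integrable χ) :
    ContDiff ℝ (⊤ : ℕ∞) (tailIntegral χ) := by
  have hderiv := hasDerivAt_tailIntegral hχ.continuous hint
  rw [contDiff_infty_iff_deriv, funext fun s => (hderiv s).deriv]
  exact ⟨fun s => (hderiv s).differentiableAt, hχ.neg⟩

lemma tailIntegral_eq_of_lt {δ r s : ℝ} (hχ : ∀ t < δ, χ t = 0) (hr : r < δ) (hs : s < δ) :
    tailIntegral χ r = tailIntegral χ s := by
  have htail : ∀ q < δ, tailIntegral χ q = ∫ t in Ici δ, χ t := fun q hq =>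
    setIntegral_eq_of_subset_of_forall_sdiff_eq_zero measurableSet_Ioi
      (Ici_subset_Ioi.2 hq) fun t ht => hχ t (not_le.1 ht.2)
  rw [htail r hr, htail s hs]

lemma tailIntegral_eq_zero {R s : ℝ} (hχ : ∀ t, R < t → χ t = 0) (hs : R ≤ s) :
    tailIntegral χ s = 0 :=
  setIntegral_eq_zero_of_forall_eq_zero fun t ht => hχ t (hs.trans_lt ht)

end TailIntegral

section LayerCake

variable {α : Type*} {χ : ℝ → ℝ} {f ρ : α → ℝ}

lemma integral_indicator_sublevel_mul_left (x : α) :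
    ∫ t, {q : ℝ × α | ρ q.2 < q.1}.indicator (fun q => χ q.1 * f q.2) (t, x) =
      tailIntegral χ (ρ x) * f x := by
  rw [tailIntegral, ← integral_mul_const, ← integral_indicator measurableSet_Ioi]
  rfl

variable [MeasurableSpace α] {μ : Measure α} {ν : Measure ℝ}

lemma integral_indicator_sublevel_mul_right (hρ : Measurable ρ) (t : ℝ) :
    ∫ x, {q : ℝ × α | ρ q.2 < q.1}.indicator (fun q => χ q.1 * f q.2) (t, x) ∂μ =
      χ t * ∫ x in {x | ρ x < t}, f x ∂μ := by
  rw [← integral_const_mul, ← integral_indicator (measurableSet_lt hρ measurable_const)]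
  rfl

lemma integrable_indicator_sublevel_mul (hχ : Integrable χ ν) (hf : Integrable f μ)
    (hρ : Measurable ρ) :
    Integrable ({q : ℝ × α | ρ q.2 < q.1}.indicator fun q => χ q.1 * f q.2) (ν.prod μ) :=
  (hχ.mul_prod hf).indicator (measurableSet_lt (by fun_prop) (by fun_prop))

variable [SFinite μ]

lemma integrable_setIntegral_sublevel [IsFiniteMeasure ν] (hf : Integrable f μ)
    (hρ : Measurable ρ) : Integrable (fun t => ∫ x in {x | ρ x < t}, f x ∂μ) ν := by
  have hprod := integrable_indicator_sublevel_mul (integrable_const (1 : ℝ)) hf hρ (ν := ν)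
  exact hprod.integral_prod_left.congr <| ae_of_all _ fun t =>
    (integral_indicator_sublevel_mul_right (χ := fun _ => 1) hρ t).trans (one_mul _)

lemma integrable_tailIntegral_mul (hχ : Integrable χ) (hf : Integrable f μ) (hρ : Measurable ρ) :
    Integrable (fun x => tailIntegral χ (ρ x) * f x) μ := by
  simpa only [integral_indicator_sublevel_mul_left] using
    (integrable_indicator_sublevel_mul hχ hf hρ).integral_prod_right

lemma integral_tailIntegral_mul (hχ : Integrable χ) (hf : Integrable f μ) (hρ : Measurable ρ) :
    ∫ x, tailIntegral χ (ρ x) * f x ∂μ = ∫ t, χ t * ∫ x in {x | ρ x < t}, f x ∂μ := by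
  have hprod := integrable_indicator_sublevel_mul hχ hf hρ
  simp only [← integral_indicator_sublevel_mul_left, ← integral_indicator_sublevel_mul_right hρ]
  rw [← integral_prod_symm _ hprod, integral_prod _ hprod]

end LayerCake

section IntervalCutoff

/-- A smooth function `ℝ → [0, 1]` supported in `[r₁ + 1/(n+1), r₂ - 1/(n+1)]`. The sequence
increases to the indicator function of the open interval `(r₁, r₂)`. -/
noncomputable def intervalCutoff (r₁ r₂ : ℝ) (n : ℕ) (t : ℝ) : ℝ :=
  Real.smoothTransition ((n + 1) * (t - r₁) - 1) * Real.smoothTransition ((n + 1) * (r₂ - t) - 1)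

variable {r₁ r₂ t : ℝ} {n : ℕ}

lemma contDiff_intervalCutoff : ContDiff ℝ (⊤ : ℕ∞) (intervalCutoff r₁ r₂ n) :=
  (Real.smoothTransition.contDiff.comp (by fun_prop)).mul
    (Real.smoothTransition.contDiff.comp (by fun_prop))

lemma abs_intervalCutoff_le_one : |intervalCutoff r₁ r₂ n t| ≤ 1 := by
  rw [intervalCutoff, abs_of_nonneg (mul_nonneg (Real.smoothTransition.nonneg _)
    (Real.smoothTransition.nonneg _))]
  exact mul_le_one₀ (Real.smoothTransition.le_one _) (Real.smoothTransition.nonneg _)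
    (Real.smoothTransition.le_one _)

lemma support_intervalCutoff_subset :
    Function.support (intervalCutoff r₁ r₂ n) ⊆
      Icc (r₁ + 1 / (n + 1)) (r₂ - 1 / (n + 1)) := by
  intro t ht
  have hn : (0 : ℝ) < n + 1 := n.cast_add_one_pos
  obtain ⟨hleft, hright⟩ := mul_ne_zero_iff.1 (Function.mem_support.1 ht)
  rw [ne_eq, Real.smoothTransition.zero_iff_nonpos, not_le, sub_pos, ← div_lt_iff₀' hn]
    at hleft hright
  constructor <;> linarith

lemma intervalCutoff_eq_zero_of_notMem_Ioo (ht : t ∉ Ioo r₁ r₂) :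
    intervalCutoff r₁ r₂ n t = 0 := by
  have hn : (0 : ℝ) < 1 / (n + 1) := Nat.one_div_pos_of_nat
  refine Function.notMem_support.1 fun h => ht ?_
  obtain ⟨hleft, hright⟩ := support_intervalCutoff_subset h
  constructor <;> linarith

lemma eventually_smoothTransition_eq_one {c : ℝ} (hc : 0 < c) :
    ∀ᶠ n : ℕ in atTop, Real.smoothTransition ((n + 1) * c - 1) = 1 := by
  have hlim : Tendsto (fun n : ℕ => ((n : ℝ) + 1) * c) atTop atTop :=
    (tendsto_atTop_add_const_right _ _ tendsto_natCast_atTop_atTop).atTop_mul_const hc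
  filter_upwards [hlim.eventually_ge_atTop 2] with n hn
  exact Real.smoothTransition.one_of_one_le (by linarith)

lemma eventually_intervalCutoff_eq_one (ht : t ∈ Ioo r₁ r₂) :
    ∀ᶠ n : ℕ in atTop, intervalCutoff r₁ r₂ n t = 1 := by
  filter_upwards [eventually_smoothTransition_eq_one (sub_pos.2 ht.1),
    eventually_smoothTransition_eq_one (sub_pos.2 ht.2)] with n hleft hright
  rw [intervalCutoff, hleft, hright, one_mul]

lemma tendsto_integral_intervalCutoff_mul {α : Type*} [MeasurableSpace α] {μ : Measure α}
    {g ρ : α → ℝ} (hρ : Measurable ρ) (hg : IntegrableOn g (ρ ⁻¹' Ioo r₁ r₂) μ) :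
    Tendsto (fun n => ∫ x, intervalCutoff r₁ r₂ n (ρ x) * g x ∂μ) atTop
      (𝓝 (∫ x in ρ ⁻¹' Ioo r₁ r₂, g x ∂μ)) := by
  have hrestrict (n : ℕ) : ∫ x in ρ ⁻¹' Ioo r₁ r₂, intervalCutoff r₁ r₂ n (ρ x) * g x ∂μ =
      ∫ x, intervalCutoff r₁ r₂ n (ρ x) * g x ∂μ :=
    setIntegral_eq_integral_of_forall_compl_eq_zero fun x hx => by
      rw [intervalCutoff_eq_zero_of_notMem_Ioo hx, zero_mul]
  simp only [← hrestrict]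
  refine tendsto_integral_of_dominated_convergence (fun x => ‖g x‖) (fun n => ?_) hg.norm
    (fun n => ae_of_all _ fun x => ?_) ?_
  · exact (contDiff_intervalCutoff.continuous.measurable.comp hρ).aestronglyMeasurable.mul
      hg.aestronglyMeasurable
  · rw [norm_mul]
    exact mul_le_of_le_one_left (norm_nonneg _) abs_intervalCutoff_le_one
  · filter_upwards [ae_restrict_mem (hρ measurableSet_Ioo)] with x hx
    refine tendsto_const_nhds.congr' ?_
    filter_upwards [eventually_intervalCutoff_eq_one hx] with n hn
    rw [hn, one_mul]

lemma tendsto_integral_intervalCutoff_mul_setIntegral_ball {α : Type*} [PseudoMetricSpace α]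
    [MeasurableSpace α] [OpensMeasurableSpace α] {μ : Measure α} [SFinite μ] {a : α} {f : α → ℝ}
    (hf : IntegrableOn f (ball a r₂) μ) :
    Tendsto (fun n => ∫ r, intervalCutoff r₁ r₂ n r *
        ∫ z in ball a r, f z ∂μ.restrict (ball a r₂)) atTop
      (𝓝 (∫ r in Ioc r₁ r₂, ∫ z in ball a r, f z ∂μ)) := by
  have hmass : IntegrableOn (fun r => ∫ z in ball a r, f z ∂μ.restrict (ball a r₂))
      (Ioo r₁ r₂) :=
    integrable_setIntegral_sublevel hf (continuous_id.dist continuous_const).measurable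
  have hball : ∫ r in Ioo r₁ r₂, ∫ z in ball a r, f z ∂μ.restrict (ball a r₂) =
      ∫ r in Ioc r₁ r₂, ∫ z in ball a r, f z ∂μ := by
    rw [integral_Ioc_eq_integral_Ioo]
    refine setIntegral_congr_fun measurableSet_Ioo fun r hr => ?_
    rw [Measure.restrict_restrict_of_subset (ball_subset_ball hr.2.le)]
  exact hball ▸ tendsto_integral_intervalCutoff_mul measurable_id hmass

end IntervalCutoff

section Pohozaev

variable {ι E F : Type*} [Fintype ι]
  [NormedAddCommGroup E] [InnerProductSpace ℝ E] [MeasurableSpace E]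
  [NormedAddCommGroup F] [InnerProductSpace ℝ F]
  {b : OrthonormalBasis ι ℝ E} {μ : Measure E} {p : ℝ} {Ω : Set E} {du : E → E →L[ℝ] F}

/-- The field of differentials `du` on `Ω` is critical for inner variations of the `p`-energy.
The map `u` itself does not enter, only its (weak) differential. -/
def IsInnerStationary (b : OrthonormalBasis ι ℝ E) (μ : Measure E) (p : ℝ) (Ω : Set E)
    (du : E → E →L[ℝ] F) : Prop :=
  ∀ X : E → E, ContDiff ℝ (⊤ : ℕ∞) X → HasCompactSupport X → tsupport X ⊆ Ω →
    ∫ z in Ω, innerVariationDensity b p (du z) (fderiv ℝ X z) ∂μ = 0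

lemma setIntegral_innerVariationDensity_eq_integral {X : E → E} (hX : tsupport X ⊆ Ω) :
    ∫ z in Ω, innerVariationDensity b p (du z) (fderiv ℝ X z) ∂μ =
      ∫ z, innerVariationDensity b p (du z) (fderiv ℝ X z) ∂μ :=
  setIntegral_eq_integral_of_forall_compl_eq_zero fun z hz => by
    rw [fderiv_of_notMem_tsupport ℝ fun h => hz (hX h), innerVariationDensity_zero_right]

lemma IsInnerStationary.mono {Ω' : Set E} (hdu : IsInnerStationary b μ p Ω du) (h : Ω' ⊆ Ω) :
    IsInnerStationary b μ p Ω' du := fun X hX hcpt hsupp => by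
  rw [setIntegral_innerVariationDensity_eq_integral hsupp,
    ← setIntegral_innerVariationDensity_eq_integral (hsupp.trans h)]
  exact hdu X hX hcpt (hsupp.trans h)

variable [FiniteDimensional ℝ E]

lemma IsInnerStationary.integral_radialField_eq_zero (hdu : IsInnerStationary b μ p Ω du)
    {χ : ℝ → ℝ} (hχ : ContDiff ℝ (⊤ : ℕ∞) χ) {δ R : ℝ} (hδ : 0 < δ)
    (hsupp : Function.support χ ⊆ Icc δ R) {a : E} (hball : closedBall a R ⊆ Ω) :
    ∫ z in Ω, innerVariationDensity b p (du z)
      (fderiv ℝ (radialField (tailIntegral χ) a) z) ∂μ = 0 := by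
  have hint : Integrable χ := hχ.continuous.integrable_of_hasCompactSupport
    (.of_support_subset_isCompact isCompact_Icc hsupp)
  have hleft : ∀ t < δ, χ t = 0 := fun t ht =>
    Function.notMem_support.1 fun h => ht.not_ge (hsupp h).1
  have hright : ∀ t, R < t → χ t = 0 := fun t ht =>
    Function.notMem_support.1 fun h => ht.not_ge (hsupp h).2
  have hconst : tailIntegral χ =ᶠ[𝓝 0] fun _ => tailIntegral χ 0 := by
    filter_upwards [Iio_mem_nhds hδ] with s hs
    exact tailIntegral_eq_of_lt hleft hs hδ
  have htsupp : tsupport (radialField (tailIntegral χ) a) ⊆ closedBall a R :=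
    tsupport_radialField_subset_closedBall (fun s hs => tailIntegral_eq_zero hright hs.le) a
  exact hdu _ (contDiff_radialField (contDiff_tailIntegral hχ hint) hconst a)
    ((isCompact_closedBall a R).of_isClosed_subset (isClosed_tsupport _) htsupp)
    (htsupp.trans hball)

variable [Nontrivial E] [BorelSpace E] [μ.IsAddHaarMeasure] {a : E} {r₁ r₂ : ℝ}

lemma IsInnerStationary.integral_tailIntegral_mul_energy
    (hdu : IsInnerStationary b μ p Ω du) (hp : 0 < p)
    (henergy : IntegrableOn (fun z => hilbertSchmidtNorm b (du z) ^ p) Ω μ)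
    (hdensity : IntegrableOn (fun z => pohozaevDensity b p (du z) (z - a)) Ω μ)
    {χ : ℝ → ℝ} (hχ : ContDiff ℝ (⊤ : ℕ∞) χ) {δ R : ℝ} (hδ : 0 < δ)
    (hsupp : Function.support χ ⊆ Icc δ R) (hball : closedBall a R ⊆ Ω) :
    ∫ z in Ω, tailIntegral χ ‖z - a‖ *
        ((Module.finrank ℝ E - p) * hilbertSchmidtNorm b (du z) ^ p) ∂μ =
      ∫ z in Ω, χ ‖z - a‖ * pohozaevDensity b p (du z) (z - a) ∂μ := by
  have hcpt : HasCompactSupport χ := .of_support_subset_isCompact isCompact_Icc hsupp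
  have hint : Integrable χ := hχ.continuous.integrable_of_hasCompactSupport hcpt
  obtain ⟨C, hC⟩ := hcpt.exists_bound_of_continuous hχ.continuous
  have hbulk := integrable_tailIntegral_mul hint
    (henergy.const_mul ((Module.finrank ℝ E : ℝ) - p)) (ρ := fun z => ‖z - a‖) (by fun_prop)
  have hboundary : IntegrableOn (fun z => χ ‖z - a‖ * pohozaevDensity b p (du z) (z - a)) Ω μ :=
    hdensity.bdd_mul (hχ.continuous.comp (by fun_prop)).aestronglyMeasurable
      (ae_of_all _ fun z => hC ‖z - a‖)
  rw [← sub_eq_zero, ← integral_sub hbulk hboundary,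
    ← hdu.integral_radialField_eq_zero hχ hδ hsupp hball]
  refine integral_congr_ae ?_
  filter_upwards [ae_restrict_of_ae (compl_mem_ae_iff.2 (measure_singleton a))] with z hz
  rw [(hasFDerivAt_radialField (hasDerivAt_tailIntegral hχ.continuous hint _) hz).fderiv,
    innerVariationDensity_smul_id_add_smul_rankOne b hp _ (sub_ne_zero.2 hz)]

lemma preimage_norm_sub_Ioo_ae_eq_ball_sdiff_ball (a : E) (r₁ r₂ : ℝ) :
    (fun z => ‖z - a‖) ⁻¹' Ioo r₁ r₂ =ᵐ[μ] (ball a r₂ \ ball a r₁ : Set E) := by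
  refine eventuallyEq_set.2 ?_
  filter_upwards [compl_mem_ae_iff.2 (Measure.addHaar_sphere μ a r₁)] with z hz
  rw [mem_compl_iff, mem_sphere_iff_norm] at hz
  simp only [mem_preimage, mem_Ioo, Set.mem_sdiff, mem_ball_iff_norm, not_lt]
  exact ⟨fun h => ⟨h.2, h.1.le⟩, fun h => ⟨h.2.lt_of_ne' hz, h.1⟩⟩

lemma IsInnerStationary.integral_intervalCutoff_mul
    (hdu : IsInnerStationary b μ p (ball a r₂) du) (hp : 0 < p)
    (henergy : IntegrableOn (fun z => hilbertSchmidtNorm b (du z) ^ p) (ball a r₂) μ)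
    (hdensity : IntegrableOn (fun z => pohozaevDensity b p (du z) (z - a)) (ball a r₂) μ)
    (hr₁ : 0 ≤ r₁) (n : ℕ) :
    ∫ r, intervalCutoff r₁ r₂ n r * ∫ z in ball a r,
        (Module.finrank ℝ E - p) * hilbertSchmidtNorm b (du z) ^ p ∂μ.restrict (ball a r₂) =
      ∫ z in ball a r₂, intervalCutoff r₁ r₂ n ‖z - a‖ *
        pohozaevDensity b p (du z) (z - a) ∂μ := by
  have hn : (0 : ℝ) < 1 / (n + 1) := Nat.one_div_pos_of_nat
  have hint : Integrable (intervalCutoff r₁ r₂ n) :=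
    contDiff_intervalCutoff.continuous.integrable_of_hasCompactSupport
      (.of_support_subset_isCompact isCompact_Icc support_intervalCutoff_subset)
  rw [← hdu.integral_tailIntegral_mul_energy hp henergy hdensity contDiff_intervalCutoff
      (by linarith) support_intervalCutoff_subset (closedBall_subset_ball (by linarith)),
    integral_tailIntegral_mul hint (henergy.const_mul _) (by fun_prop)]
  simp only [ball, dist_eq_norm]

lemma tendsto_integral_intervalCutoff_norm_sub_mul {g : E → ℝ}
    (hg : IntegrableOn g (ball a r₂) μ) :
    Tendsto (fun n => ∫ z in ball a r₂, intervalCutoff r₁ r₂ n ‖z - a‖ * g z ∂μ) atTop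
      (𝓝 (∫ z in ball a r₂ \ ball a r₁, g z ∂μ)) := by
  have hsub : (fun z => ‖z - a‖) ⁻¹' Ioo r₁ r₂ ⊆ ball a r₂ := fun z hz =>
    mem_ball_iff_norm.2 hz.2
  rw [← setIntegral_congr_set (preimage_norm_sub_Ioo_ae_eq_ball_sdiff_ball a r₁ r₂),
    ← Measure.restrict_restrict_of_subset hsub]
  exact tendsto_integral_intervalCutoff_mul (by fun_prop) hg.integrable.integrableOn

theorem pohozaev_identity_general (hdu : IsInnerStationary b μ p Ω du) (hp : 0 < p)
    (hmeas : AEStronglyMeasurable du (μ.restrict Ω))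
    (henergy : IntegrableOn (fun z => hilbertSchmidtNorm b (du z) ^ p) Ω μ)
    (hr₁ : 0 ≤ r₁) (hsub : ball a r₂ ⊆ Ω) :
    ∫ r in Ioc r₁ r₂, ∫ z in ball a r,
        (Module.finrank ℝ E - p) * hilbertSchmidtNorm b (du z) ^ p ∂μ =
      ∫ z in ball a r₂ \ ball a r₁, pohozaevDensity b p (du z) (z - a) ∂μ := by
  have henergy' := henergy.mono_set hsub
  have hdensity := integrableOn_pohozaevDensity_ball b hp
    (hmeas.mono_measure (Measure.restrict_mono_set μ hsub)) henergy'
  refine tendsto_nhds_unique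
    (tendsto_integral_intervalCutoff_mul_setIntegral_ball (henergy'.const_mul _))
    ((tendsto_integral_intervalCutoff_norm_sub_mul hdensity).congr fun n => ?_)
  exact ((hdu.mono hsub).integral_intervalCutoff_mul hp henergy' hdensity hr₁ n).symm

end Pohozaev

section Planar

lemma rinner_eq_inner (x y : ℂ) : rinner x y = inner ℝ x y := by
  rw [rinner, Complex.inner, mul_comm]

lemma cb_eq_orthonormalBasisOneI : cb = Complex.orthonormalBasisOneI := by
  simp [cb]

lemma hsNorm_eq_hilbertSchmidtNorm (T : ℂ →L[ℝ] ℂ) :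
    hsNorm T = hilbertSchmidtNorm Complex.orthonormalBasisOneI T := by
  simp [hsNorm, hilbertSchmidtNorm, hilbertSchmidtInner_self_eq_sum]

lemma StatPHarm.isInnerStationary {p : ℝ} {Ω : Set ℂ} {u : ℂ → ℂ} {du : ℂ → ℂ →L[ℝ] ℂ}
    (h : StatPHarm p Ω u du) :
    IsInnerStationary Complex.orthonormalBasisOneI volume p Ω du := by
  intro X hX hcpt hsupp
  simp only [innerVariationDensity, hilbertSchmidtInner_comp_eq_sum_sum]
  simpa only [hilbertSchmidtInner, ContinuousLinearMap.id_apply, rinner_eq_inner,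
    cb_eq_orthonormalBasisOneI, hsNorm_eq_hilbertSchmidtNorm] using h.2 X ⟨hX, hcpt, hsupp⟩

end Planar

/-- **Lemma 6.4** (Pohozaev-type identity). Let `u ∈ W^{1,p}(D₂(0),S¹)` be a stationary
`p`-harmonic map on the Euclidean disk `D₂(0) ⊆ ℝ² ≃ ℂ`, `p ∈ (1,2)`. Then on any
annulus `A_{r₁,r₂}(a) = D_{r₂}(a) ∖ D_{r₁}(a) ⊆ D₂(0)`,
`∫_{r₁}^{r₂} (∫_{D_r(a)} (2-p)|du|^p) dr
  = ∫_{A_{r₁,r₂}(a)} |z-a| (|du|^p - p|du|^{p-2}|du((z-a)/|z-a|)|²) dz`. -/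
theorem pohozaev_identity
    (p : ℝ) (hp : p ∈ Set.Ioo (1 : ℝ) 2)
    (u : ℂ → ℂ) (du : ℂ → ℂ →L[ℝ] ℂ)
    (hW : MemW1pS1 p (ball (0 : ℂ) 2) u du)
    (hstat : StatPHarm p (ball (0 : ℂ) 2) u du)
    (a : ℂ) (r₁ r₂ : ℝ) (hr₁ : 0 ≤ r₁) (hr₁₂ : r₁ ≤ r₂)
    (hsub : ball a r₂ ⊆ ball (0 : ℂ) 2) :
    (∫ r in Set.Ioc r₁ r₂, ∫ z in ball a r, (2 - p) * hsNorm (du z) ^ p) =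
      ∫ z in ball a r₂ \ ball a r₁,
        ‖z - a‖ * (hsNorm (du z) ^ p -
          p * hsNorm (du z) ^ (p - 2) * ‖du z (‖z - a‖⁻¹ • (z - a))‖ ^ 2) := by
  obtain ⟨-, -, hmeas, henergy, -⟩ := hW
  simp only [hsNorm_eq_hilbertSchmidtNorm] at henergy ⊢
  simpa only [pohozaevDensity, Complex.finrank_real_complex, Nat.cast_ofNat] using
    pohozaev_identity_general hstat.isInnerStationary (zero_lt_one.trans hp.1) hmeas henergy
      hr₁ hsub
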